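/- Let A > 13 and δ > 0 be fixed and let h ∈ 𝓗(A,δ). Then for every x with 0 < x < 4π the integral defining H⁺(x) converges absolutely, and there exists a constant C = C(A,h) such that for all x ∈ (0,4π) one has |H⁺(x) − (4/π) Σ_{k=0}^{⌊A⌋−1} (−1)^k (k+1/2) h(−i(k+1/2)) J_{2k+1}(x)| ≤ C·x^{2⌊A⌋}. -/

import Mathlib

open MeasureTheory Real Complex

/-- The Bessel function of the first kind `J_ν(x)`, for `x > 0`, defined via its power series,
where `(x/2)^w := exp (w * log (x/2))` with the real logarithm. -/
noncomputable def besselJ (ν : ℂ) (x : ℝ) : ℂ :=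
  ∑' m : ℕ, ((-1) ^ m / ((Nat.factorial m : ℂ) * Complex.Gamma (m + ν + 1))) *
    Complex.exp ((2 * m + ν) * Real.log (x / 2))

/-- The integral transform `H⁺(x) = (2i/π) ∫_ℝ h(t) J_{2it}(x) t / cosh(πt) dt`. -/
noncomputable def Hplus (h : ℝ → ℝ) (x : ℝ) : ℂ :=
  (2 * Complex.I / (π : ℂ)) *
    ∫ t : ℝ, (h t : ℂ) * besselJ (2 * Complex.I * t) x * ((t : ℂ) / (Real.cosh (π * t) : ℂ))

/-- `h : ℝ → ℝ` belongs to the class `𝓗(A, δ)`, witnessed by the holomorphic extension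
`H : ℂ → ℂ` to the strip `{s : |Im s| ≤ A}`. -/
structure IsInHClass (A δ : ℝ) (h : ℝ → ℝ) (H : ℂ → ℂ) : Prop where
  nonneg : ∀ t : ℝ, 0 ≤ h t
  even : ∀ t : ℝ, h (-t) = h t
  not_zero : ∃ t : ℝ, h t ≠ 0
  extends_h : ∀ t : ℝ, H (t : ℂ) = (h t : ℂ)
  even_ext : ∀ s : ℂ, H (-s) = H s
  holo : DifferentiableOn ℂ H {s : ℂ | |s.im| ≤ A}
  bound : ∃ C : ℝ, ∀ s : ℂ, |s.im| ≤ A → ‖H s‖ ≤ C * (1 + ‖s‖) ^ (-(2 + δ))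

/-!
With `G(s) = s H(s) J_{2is}(x)`, the transform `H⁺(x)` is a multiple of `∫ G(t) / cosh(πt) dt`.
If `G` is holomorphic and `o(cosh(π re s))` in a horizontal strip of height one whose midline
contains `p`, then Cauchy's theorem for `(G(s) - G(p)) / sinh(π(s - p))`, together with
`∫ dt / cosh(πt) = 1`, shows that the integrals of `G / cosh` over the two edges add up to `2 G(p)`.
Descending in unit steps from `im s = 0` to `im s = -N`, `N = ⌊A⌋`, thus produces the alternating
sum of the values `G(-i(k + 1/2))` and leaves an integral over the last line. There the bound
`|J_ν(x)| ≪ √cosh(π im ν) (x/2)^{re ν}` with `ν = 2is` contributes `cosh(πt) (x/2)^{2N}`. The Bessel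
bound rests on `|1/Γ(z)| ≤ √cosh(π im z) / Γ(re z)` for `re z ≥ 1/2`.
-/

open Filter Set Topology Asymptotics
open scoped Nat

section Gamma

lemma one_half_le_Gamma {x : ℝ} (hx : 0 < x) : 1 / 2 ≤ Real.Gamma x := by
  have one_le {y : ℝ} (hy : 2 ≤ y) : 1 ≤ Real.Gamma y :=
    Real.Gamma_two.symm.trans_le
      (Real.Gamma_strictMonoOn_Ici.monotoneOn self_mem_Ici (mem_Ici.2 hy) hy)
  have hΓ : 0 < Real.Gamma x := Real.Gamma_pos_of_pos hx
  have hΓ₁ : Real.Gamma (x + 1) = x * Real.Gamma x := Real.Gamma_add_one hx.ne'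
  rcases le_total 2 x with h | h
  · linarith [one_le h]
  rcases le_total 1 x with h' | h'
  · nlinarith [one_le (show 2 ≤ x + 1 by linarith)]
  · have hΓ₂ : Real.Gamma (x + 1 + 1) = (x + 1) * Real.Gamma (x + 1) :=
      Real.Gamma_add_one (by linarith)
    nlinarith [one_le (show 2 ≤ x + 1 + 1 by linarith), mul_pos hx hΓ]

lemma norm_Gamma_one_half_add_mul_I_sq (y : ℝ) :
    ‖Complex.Gamma (1 / 2 + y * I)‖ ^ 2 = π / Real.cosh (π * y) := by
  have hconj : 1 - (1 / 2 + y * I) = (starRingEnd ℂ) (1 / 2 + y * I) := by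
    simp only [map_add, map_mul, map_div₀, map_one, map_ofNat, conj_ofReal, conj_I]
    ring
  have hsin : Complex.sin (π * (1 / 2 + y * I)) = Real.cosh (π * y) := by
    rw [show (π : ℂ) * (1 / 2 + y * I) = ↑(π * y) * I + π / 2 by push_cast; ring,
      Complex.sin_add_pi_div_two, Complex.cos_mul_I, ofReal_cosh]
  have hrefl := Complex.Gamma_mul_Gamma_one_sub (1 / 2 + y * I)
  rw [hconj, Complex.Gamma_conj, mul_conj', hsin] at hrefl
  exact_mod_cast hrefl

lemma norm_betaIntegral_le {u v : ℂ} (hu : 0 < u.re) (hv : 0 < v.re) :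
    ‖betaIntegral u v‖ ≤ ProbabilityTheory.beta u.re v.re := by
  have hnorm : ∀ t ∈ Ioo (0 : ℝ) 1, ‖(t : ℂ) ^ (u - 1) * (1 - (t : ℂ)) ^ (v - 1)‖ =
      ((t : ℂ) ^ ((u.re : ℂ) - 1) * (1 - (t : ℂ)) ^ ((v.re : ℂ) - 1)).re := fun t ht ↦ by
    have ht' : 0 < 1 - t := sub_pos.2 ht.2
    norm_cast
    rw [norm_mul, norm_cpow_eq_rpow_re_of_pos ht.1, norm_cpow_eq_rpow_re_of_pos ht',
      ← ofReal_cpow ht.1.le, ← ofReal_cpow ht'.le, ← ofReal_mul, ofReal_re]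
    simp
  rw [ProbabilityTheory.beta_eq_betaIntegralReal _ _ hu hv, betaIntegral, betaIntegral,
    intervalIntegral.integral_of_le zero_le_one, intervalIntegral.integral_of_le zero_le_one,
    integral_Ioc_eq_integral_Ioo, integral_Ioc_eq_integral_Ioo]
  refine (norm_integral_le_integral_norm _).trans_eq ?_
  rw [setIntegral_congr_fun measurableSet_Ioo hnorm]
  have hconv := betaIntegral_convergent (u := u.re) (v := v.re) (by simpa) (by simpa)
  exact integral_re (((intervalIntegrable_iff_integrableOn_Ioc_of_le zero_le_one).1 hconv).mono_set
    Ioo_subset_Ioc_self)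

lemma norm_Gamma_mul_Gamma_re_add_le {z : ℂ} {c : ℝ} (hz : 0 < z.re) (hc : 0 ≤ c) :
    ‖Complex.Gamma z‖ * Real.Gamma (z.re + c) ≤ Real.Gamma z.re * ‖Complex.Gamma (z + c)‖ := by
  rcases hc.eq_or_lt with rfl | hc
  · simp [mul_comm]
  have hbeta := norm_betaIntegral_le hz (v := c) (by simpa)
  have hΓ : 0 < ‖Complex.Gamma (z + c)‖ :=
    norm_pos_iff.2 (Complex.Gamma_ne_zero_of_re_pos (by simp; linarith))
  rw [betaIntegral_eq_Gamma_mul_div _ _ hz (by simpa), Complex.Gamma_ofReal, norm_div, norm_mul,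
    norm_real, Real.norm_of_nonneg (Real.Gamma_pos_of_pos hc).le, ofReal_re,
    ProbabilityTheory.beta, div_le_div_iff₀ hΓ (Real.Gamma_pos_of_pos (by linarith))] at hbeta
  nlinarith [Real.Gamma_pos_of_pos hc]

lemma norm_inv_Gamma_le {z : ℂ} (hz : 1 / 2 ≤ z.re) :
    ‖(Complex.Gamma z)⁻¹‖ ≤ √(Real.cosh (π * z.im)) / Real.Gamma z.re := by
  have hΓ : 0 < ‖Complex.Gamma z‖ :=
    norm_pos_iff.2 (Complex.Gamma_ne_zero_of_re_pos (by linarith))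
  have hhalf : ‖Complex.Gamma (1 / 2 + z.im * I)‖ = √π / √(Real.cosh (π * z.im)) := by
    rw [← Real.sqrt_div' _ (Real.cosh_pos _).le, ← norm_Gamma_one_half_add_mul_I_sq,
      Real.sqrt_sq (norm_nonneg _)]
  -- Compare `Γ z` with its value at height `im z` on `re = 1 / 2`, where `|Γ|` is explicit.
  have hmono := norm_Gamma_mul_Gamma_re_add_le (z := 1 / 2 + z.im * I) (c := z.re - 1 / 2)
    (by simp) (by linarith)
  have hz_eq : 1 / 2 + z.im * I + ↑(z.re - 1 / 2) = z := by
    nth_rw 3 [← re_add_im z]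
    push_cast
    ring
  rw [hz_eq, hhalf, show (1 / 2 + z.im * I).re = 1 / 2 by simp, add_sub_cancel,
    Real.Gamma_one_half_eq, div_mul_eq_mul_div, mul_div_assoc] at hmono
  have hbound : 0 < √(Real.cosh (π * z.im)) / Real.Gamma z.re :=
    div_pos (Real.sqrt_pos.2 (Real.cosh_pos _)) (Real.Gamma_pos_of_pos (by linarith))
  rw [norm_inv, inv_le_comm₀ hΓ hbound, inv_div]
  exact le_of_mul_le_mul_left hmono (Real.sqrt_pos.2 Real.pi_pos)

end Gamma

section Bessel

/-- The `m`-th term of the power series defining `besselJ ν x`, for termwise estimates. -/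
noncomputable def besselTerm (ν : ℂ) (x : ℝ) (m : ℕ) : ℂ :=
  (-1) ^ m / ((m ! : ℂ) * Complex.Gamma (m + ν + 1)) *
    Complex.exp ((2 * m + ν) * Real.log (x / 2))

variable {ν : ℂ} {x : ℝ}

lemma norm_besselTerm_le (hx : 0 < x) (hν : -(1 / 2) ≤ ν.re) (m : ℕ) :
    ‖besselTerm ν x m‖ ≤
      2 * √(Real.cosh (π * ν.im)) * (x / 2) ^ ν.re * (((x / 2) ^ 2) ^ m / m !) := by
  have hre : (m + ν + 1).re = m + ν.re + 1 := by simp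
  have him : (m + ν + 1).im = ν.im := by simp
  have hre_pos : 1 / 2 ≤ m + ν.re + 1 := by linarith [m.cast_nonneg (α := ℝ)]
  have hΓ : ‖(Complex.Gamma (m + ν + 1))⁻¹‖ ≤ 2 * √(Real.cosh (π * ν.im)) := by
    have h := norm_inv_Gamma_le (hre.symm ▸ hre_pos)
    rw [hre, him] at h
    refine h.trans ((div_le_iff₀ (Real.Gamma_pos_of_pos (by linarith))).2 ?_)
    nlinarith [one_half_le_Gamma (show 0 < m + ν.re + 1 by linarith),
      Real.sqrt_nonneg (Real.cosh (π * ν.im))]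
  have hexp : ‖Complex.exp ((2 * m + ν) * Real.log (x / 2))‖ =
      ((x / 2) ^ 2) ^ m * (x / 2) ^ ν.re := by
    rw [Complex.norm_exp, re_mul_ofReal, show (2 * m + ν).re = 2 * m + ν.re by simp, mul_comm,
      ← Real.rpow_def_of_pos (by positivity), Real.rpow_add (by positivity), ← pow_mul]
    norm_cast
  rw [besselTerm, norm_mul, hexp, norm_div, norm_pow, norm_neg, norm_one, one_pow, norm_mul,
    Complex.norm_natCast, one_div, mul_inv, ← norm_inv (Complex.Gamma _)]
  calc (m ! : ℝ)⁻¹ * ‖(Complex.Gamma (m + ν + 1))⁻¹‖ * (((x / 2) ^ 2) ^ m * (x / 2) ^ ν.re)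
    _ ≤ (m ! : ℝ)⁻¹ * (2 * √(Real.cosh (π * ν.im))) *
          (((x / 2) ^ 2) ^ m * (x / 2) ^ ν.re) := by gcongr
    _ = _ := by ring

lemma norm_besselJ_le (hx : 0 < x) (hν : -(1 / 2) ≤ ν.re) :
    ‖besselJ ν x‖ ≤
      2 * √(Real.cosh (π * ν.im)) * (x / 2) ^ ν.re * Real.exp ((x / 2) ^ 2) := by
  have hsum := NormedSpace.expSeries_div_hasSum_exp ((x / 2) ^ 2)
  rw [← Real.exp_eq_exp_ℝ] at hsum
  exact tsum_of_norm_bounded (hsum.mul_left _) (norm_besselTerm_le hx hν)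

lemma differentiable_besselTerm (x : ℝ) (m : ℕ) : Differentiable ℂ fun ν ↦ besselTerm ν x m := by
  have hΓ : Differentiable ℂ fun ν : ℂ ↦ (Complex.Gamma (m + ν + 1))⁻¹ :=
    differentiable_one_div_Gamma.comp (by fun_prop)
  simp only [besselTerm, div_eq_mul_inv, mul_inv]
  fun_prop

lemma differentiableOn_besselJ (hx : 0 < x) :
    DifferentiableOn ℂ (fun ν ↦ besselJ ν x) {ν | -(1 / 2) < ν.re} := by
  intro ν₀ hν₀
  set B : ℂ → ℝ := fun ν ↦ 2 * √(Real.cosh (π * ν.im)) * (x / 2) ^ ν.re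
  have hB : Continuous B := by
    have hpow : Continuous fun ν : ℂ ↦ (x / 2) ^ ν.re :=
      continuous_const.rpow continuous_re fun _ ↦ Or.inl (by positivity)
    fun_prop
  set U : Set ℂ := {ν | -(1 / 2) < ν.re} ∩ {ν | B ν < B ν₀ + 1}
  -- On `U`, a neighbourhood of `ν₀`, the terms have a summable majorant independent of `ν`.
  have hU : IsOpen U :=
    (isOpen_lt continuous_const continuous_re).inter (isOpen_lt hB continuous_const)
  have hdiff : DifferentiableOn ℂ (fun ν ↦ ∑' m, besselTerm ν x m) U := by
    refine Complex.differentiableOn_tsum_of_summable_norm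
      ((Real.summable_pow_div_factorial ((x / 2) ^ 2)).mul_left (B ν₀ + 1))
      (fun m ↦ (differentiable_besselTerm x m).differentiableOn) hU fun m ν hν ↦ ?_
    refine (norm_besselTerm_le hx hν.1.le m).trans ?_
    gcongr
    exact hν.2.le
  exact (hdiff.differentiableAt (hU.mem_nhds ⟨hν₀, lt_add_one (B ν₀)⟩)).differentiableWithinAt

end Bessel

section ContourShift

/-- The filter of points of the closed strip `a ≤ im s ≤ b` whose real part tends to `±∞`: the
regime in which the integrals over the vertical sides of long rectangles are controlled. -/
def stripAtInfty (a b : ℝ) : Filter ℂ := comap re (cocompact ℝ) ⊓ 𝓟 (im ⁻¹' Icc a b)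

variable {a b : ℝ}

lemma eventually_stripAtInfty {p : ℂ → Prop} :
    (∀ᶠ s in stripAtInfty a b, p s) ↔
      ∀ᶠ T : ℝ in cocompact ℝ, ∀ y ∈ Icc a b, p (T + y * I) := by
  rw [stripAtInfty, eventually_inf_principal, eventually_comap]
  refine eventually_congr (.of_forall fun T ↦ ⟨fun h y hy ↦ h _ (by simp) (by simpa), ?_⟩)
  rintro h s rfl hs
  simpa only [re_add_im] using h s.im hs

lemma stripAtInfty_mono {c d : ℝ} (hac : a ≤ c) (hdb : d ≤ b) :
    stripAtInfty c d ≤ stripAtInfty a b :=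
  inf_le_inf_left _ (principal_mono.2 (preimage_mono (Icc_subset_Icc hac hdb)))

lemma closure_im_preimage_Ioo (hab : a ≠ b) : closure (im ⁻¹' Ioo a b) = im ⁻¹' Icc a b := by
  rw [closure_preimage_im, closure_Ioo hab]

variable {E : Type*} [NormedAddCommGroup E] [NormedSpace ℂ E] {g : ℂ → E}

lemma tendsto_integral_vertical_zero (hab : a < b) (hg : Tendsto g (stripAtInfty a b) (𝓝 0)) :
    Tendsto (fun T : ℝ ↦ ∫ y : ℝ in a..b, g (T + y * I)) (cocompact ℝ) (𝓝 0) := by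
  have hab' : 0 < b - a := sub_pos.2 hab
  refine NormedAddGroup.tendsto_nhds_zero.2 fun ε hε ↦ ?_
  have hsmall := NormedAddGroup.tendsto_nhds_zero.1 hg (ε / 2 / (b - a)) (by positivity)
  filter_upwards [eventually_stripAtInfty.1 hsmall] with T hT
  calc ‖∫ y : ℝ in a..b, g (T + y * I)‖
    _ ≤ ε / 2 / (b - a) * |b - a| :=
        intervalIntegral.norm_integral_le_of_norm_le_const fun y hy ↦
          (hT y (Ioc_subset_Icc_self (uIoc_of_le hab.le ▸ hy))).le
    _ < ε := by rw [abs_of_pos hab', div_mul_cancel₀ _ hab'.ne']; exact half_lt_self hε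

lemma integral_horizontal_eq [CompleteSpace E] (hab : a < b)
    (hd : DiffContOnCl ℂ g (im ⁻¹' Ioo a b)) (hg : Tendsto g (stripAtInfty a b) (𝓝 0))
    (ha : Integrable fun t : ℝ ↦ g (t + a * I)) (hb : Integrable fun t : ℝ ↦ g (t + b * I)) :
    ∫ t : ℝ, g (t + a * I) = ∫ t : ℝ, g (t + b * I) := by
  have hrect (T : ℝ) : (∫ t : ℝ in -T..T, g (t + a * I)) - (∫ t : ℝ in -T..T, g (t + b * I)) +
      I • (∫ y : ℝ in a..b, g (T + y * I)) -
      I • (∫ y : ℝ in a..b, g ((-T : ℝ) + y * I)) = 0 := by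
    have h := integral_boundary_rect_eq_zero_of_continuousOn_of_differentiableOn g
      (⟨-T, a⟩ : ℂ) ⟨T, b⟩ ?_ ?_
    · exact h
    · refine hd.continuousOn.mono fun s hs ↦ ?_
      rw [closure_im_preimage_Ioo hab.ne]
      exact uIcc_of_le hab.le ▸ hs.2
    · refine hd.differentiableOn.mono fun s hs ↦ ?_
      have him := hs.2
      rwa [min_eq_left hab.le, max_eq_right hab.le] at him
  have hvert := tendsto_integral_vertical_zero hab hg
  have hlim := (((intervalIntegral_tendsto_integral ha tendsto_neg_atTop_atBot tendsto_id).sub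
    (intervalIntegral_tendsto_integral hb tendsto_neg_atTop_atBot tendsto_id)).add
    ((hvert.mono_left atTop_le_cocompact).const_smul I)).sub
    (((hvert.mono_left atBot_le_cocompact).comp tendsto_neg_atTop_atBot).const_smul I)
  have heq := tendsto_nhds_unique hlim (tendsto_const_nhds.congr fun T ↦ (hrect T).symm)
  simpa only [smul_zero, add_zero, sub_zero, sub_eq_zero] using heq

end ContourShift

section Hyperbolic

lemma half_sq_add_one_le_cosh (t : ℝ) : t ^ 2 / 2 + 1 ≤ Real.cosh t := by
  have hdouble := Real.cosh_two_mul (t / 2)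
  rw [Real.cosh_sq, mul_div_cancel₀ t two_ne_zero] at hdouble
  have hsinh : (t / 2) ^ 2 ≤ Real.sinh (t / 2) ^ 2 := by
    rw [sq_le_sq, Real.abs_sinh]
    exact Real.self_le_sinh_iff.2 (abs_nonneg _)
  linarith

lemma cosh_le_two_mul_abs_sinh {t : ℝ} (ht : 1 ≤ |t|) : Real.cosh t ≤ 2 * |Real.sinh t| := by
  have hsinh : 1 ≤ |Real.sinh t| :=
    Real.abs_sinh t ▸ ht.trans (Real.self_le_sinh_iff.2 (abs_nonneg t))
  have hsq := Real.cosh_sq t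
  rw [← sq_abs (Real.sinh t)] at hsq
  nlinarith [Real.cosh_pos t]

lemma sqrt_cosh_two_mul_le (t : ℝ) : √(Real.cosh (2 * t)) ≤ 2 * Real.cosh t := by
  refine Real.sqrt_le_iff.2 ⟨by positivity, ?_⟩
  rw [Real.cosh_two_mul, Real.sinh_sq]
  nlinarith [sq_nonneg (Real.cosh t)]

lemma integrable_inv_cosh : Integrable fun t : ℝ ↦ (Real.cosh t)⁻¹ := by
  have hcont : Continuous fun t : ℝ ↦ (Real.cosh t)⁻¹ :=
    Real.continuous_cosh.inv₀ fun t ↦ (Real.cosh_pos t).ne'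
  refine (integrable_inv_one_add_sq.const_mul 2).mono' hcont.aestronglyMeasurable
    (.of_forall fun t ↦ ?_)
  have hinv : 2 * (1 + t ^ 2)⁻¹ = ((1 + t ^ 2) / 2)⁻¹ := by rw [inv_div, div_eq_mul_inv]
  rw [norm_inv, Real.norm_of_nonneg (Real.cosh_pos t).le, hinv]
  exact inv_anti₀ (by positivity) (by linarith [half_sq_add_one_le_cosh t])

lemma integral_inv_cosh : ∫ t : ℝ, (Real.cosh t)⁻¹ = π := by
  have hderiv (t : ℝ) : HasDerivAt (fun t ↦ Real.arctan (Real.sinh t)) (Real.cosh t)⁻¹ t := by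
    convert (Real.hasDerivAt_sinh t).arctan using 1
    rw [add_comm, ← Real.cosh_sq]
    field_simp
  have hbot := (Real.tendsto_arctan_atBot.mono_right nhdsWithin_le_nhds).comp
    Real.sinhOrderIso.tendsto_atBot
  have htop := (Real.tendsto_arctan_atTop.mono_right nhdsWithin_le_nhds).comp
    Real.sinhOrderIso.tendsto_atTop
  rw [integral_of_hasDerivAt_of_tendsto hderiv integrable_inv_cosh hbot htop]
  ring

lemma norm_sinh_sq (z : ℂ) :
    ‖Complex.sinh z‖ ^ 2 = Real.sinh z.re ^ 2 + Real.sin z.im ^ 2 := by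
  have hz : Complex.sinh z = (Real.sinh z.re * Real.cos z.im : ℝ) +
      (Real.cosh z.re * Real.sin z.im : ℝ) * I := by
    nth_rw 1 [← re_add_im z]
    rw [Complex.sinh_add, Complex.cosh_mul_I, Complex.sinh_mul_I]
    push_cast
    ring
  rw [hz, ← normSq_eq_norm_sq, normSq_add_mul_I, mul_pow, mul_pow, Real.cosh_sq, Real.cos_sq']
  ring

lemma abs_sinh_re_le_norm_sinh (z : ℂ) : |Real.sinh z.re| ≤ ‖Complex.sinh z‖ := by
  rw [← abs_norm, ← sq_le_sq, norm_sinh_sq]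
  exact le_add_of_nonneg_right (sq_nonneg _)

lemma sinh_ne_zero_of_abs_im_lt_pi {z : ℂ} (hz : z ≠ 0) (him : |z.im| < π) :
    Complex.sinh z ≠ 0 := by
  intro h
  have hsq := norm_sinh_sq z
  rw [h, norm_zero, zero_pow two_ne_zero] at hsq
  have hre : Real.sinh z.re = 0 := by nlinarith [sq_nonneg (Real.sin z.im)]
  have him' : Real.sin z.im = 0 := by nlinarith [sq_nonneg (Real.sinh z.re)]
  refine hz (Complex.ext (Real.sinh_eq_zero.1 hre) ?_)
  exact (Real.sin_eq_zero_iff_of_lt_of_lt (abs_lt.1 him).1 (abs_lt.1 him).2).1 him'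

lemma tendsto_cosh_pi_mul_cocompact :
    Tendsto (fun t : ℝ ↦ Real.cosh (π * t)) (cocompact ℝ) atTop := by
  refine tendsto_atTop_mono (fun t ↦ ?_) tendsto_norm_cocompact_atTop
  have habs : |t| ≤ |π * t| := by
    rw [abs_mul, abs_of_pos Real.pi_pos]
    exact le_mul_of_one_le_left (abs_nonneg t) (by linarith [Real.pi_gt_three])
  rw [Real.norm_eq_abs]
  nlinarith [half_sq_add_one_le_cosh (π * t), sq_nonneg (|π * t| - 1), sq_abs (π * t)]

lemma cosh_isBigO_sinh_sub (a b c : ℝ) :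
    (fun s : ℂ ↦ Real.cosh (π * s.re)) =O[stripAtInfty a b]
      fun s ↦ Complex.sinh (π * (s - c * I)) := by
  refine .of_bound 2 (eventually_stripAtInfty.2 ?_)
  filter_upwards [tendsto_norm_cocompact_atTop.eventually_ge_atTop 1] with T hT y _
  have hre (T y : ℝ) : (π * (T + y * I - c * I)).re = π * T := by simp
  have hT' : 1 ≤ |π * T| := by
    rw [abs_mul, abs_of_pos Real.pi_pos]
    nlinarith [Real.pi_gt_three, Real.norm_eq_abs T]
  calc ‖Real.cosh (π * (T + y * I : ℂ).re)‖
    _ = Real.cosh (π * T) := by simp [(Real.cosh_pos _).le]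
    _ ≤ 2 * |Real.sinh (π * T)| := cosh_le_two_mul_abs_sinh hT'
    _ ≤ 2 * ‖Complex.sinh (π * (T + y * I - c * I))‖ := by
        gcongr
        exact hre T y ▸ abs_sinh_re_le_norm_sinh _

lemma const_isLittleO_cosh_strip (a b : ℝ) (w : ℂ) :
    (fun _ : ℂ ↦ w) =o[stripAtInfty a b] fun s ↦ Real.cosh (π * s.re) := by
  refine isLittleO_const_left.2 (.inr ?_)
  exact (tendsto_norm_atTop_atTop.comp tendsto_cosh_pi_mul_cocompact).comp
    (tendsto_comap.mono_left inf_le_left)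

end Hyperbolic

section Poisson

/-- Absolute convergence of the integral `sechIntegral F y`. -/
def SechIntegrable (F : ℂ → ℂ) (y : ℝ) : Prop :=
  Integrable fun t : ℝ ↦ F (t + y * I) / (Real.cosh (π * t) : ℂ)

/-- The integral of `F` over the horizontal line of height `y` against the weight `1 / cosh (π t)`,
which is, up to a factor, the Poisson kernel of a strip of height one seen from its midline. -/
noncomputable def sechIntegral (F : ℂ → ℂ) (y : ℝ) : ℂ :=
  ∫ t : ℝ, F (t + y * I) / (Real.cosh (π * t) : ℂ)

lemma diffContOnCl_dslope {f : ℂ → ℂ} {U : Set ℂ} {p : ℂ} (hU : IsOpen U) (hp : p ∈ U)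
    (hf : DiffContOnCl ℂ f U) : DiffContOnCl ℂ (dslope f p) U where
  differentiableOn := (differentiableOn_dslope (hU.mem_nhds hp)).2 hf.differentiableOn
  continuousOn := (continuousOn_dslope (mem_of_superset (hU.mem_nhds hp) subset_closure)).2
    ⟨hf.continuousOn, hf.differentiableAt hU hp⟩

lemma dslope_div_dslope_of_ne {f g : ℂ → ℂ} {p s : ℂ} (hs : s ≠ p) :
    dslope f p s / dslope g p s = (f s - f p) / (g s - g p) := by
  rw [dslope_of_ne _ hs, dslope_of_ne _ hs, slope_def_field, slope_def_field,
    div_div_div_cancel_right₀ (sub_ne_zero.2 hs)]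

lemma dslope_sinh_ne_zero {p s : ℂ} (hs : |s.im - p.im| < 1) :
    dslope (fun s ↦ Complex.sinh (π * (s - p))) p s ≠ 0 := by
  rcases eq_or_ne s p with rfl | hne
  · have hderiv : HasDerivAt (fun z ↦ Complex.sinh (π * (z - s))) π s := by
      simpa using (((hasDerivAt_id s).sub_const s).const_mul (π : ℂ)).csinh
    rw [dslope_same, hderiv.deriv]
    exact ofReal_ne_zero.2 Real.pi_ne_zero
  · have him : |(π * (s - p)).im| < π := by
      rw [im_ofReal_mul, sub_im, abs_mul, abs_of_pos Real.pi_pos]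
      exact mul_lt_of_lt_one_right Real.pi_pos hs
    have hsinh := sinh_ne_zero_of_abs_im_lt_pi
      (mul_ne_zero (ofReal_ne_zero.2 Real.pi_ne_zero) (sub_ne_zero.2 hne)) him
    rw [dslope_of_ne _ hne, slope_def_field]
    simpa [sub_ne_zero.2 hne] using hsinh

lemma sinh_pi_mul_of_cos_eq_zero {c y : ℝ} (hy : Real.cos (π * (y - c)) = 0) (t : ℝ) :
    Complex.sinh (π * (t + y * I - c * I)) = Real.sin (π * (y - c)) * I * Real.cosh (π * t) := by
  rw [show (π : ℂ) * (t + y * I - c * I) = ↑(π * t) + ↑(π * (y - c)) * I by push_cast; ring,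
    Complex.sinh_add, Complex.cosh_mul_I, Complex.sinh_mul_I, ← ofReal_cos, hy, ofReal_cosh,
    ofReal_sin, ofReal_zero, mul_zero, zero_add]
  ring

lemma integrable_const_mul_inv_cosh_pi (w : ℂ) :
    Integrable fun t : ℝ ↦ w * ((Real.cosh (π * t))⁻¹ : ℝ) :=
  (integrable_inv_cosh.comp_mul_left' Real.pi_ne_zero).ofReal.const_mul w

lemma integral_const_mul_inv_cosh_pi (w : ℂ) : ∫ t : ℝ, w * ((Real.cosh (π * t))⁻¹ : ℝ) = w := by
  have hreal : ∫ t : ℝ, (Real.cosh (π * t))⁻¹ = 1 := by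
    rw [Measure.integral_comp_mul_left (fun t ↦ (Real.cosh t)⁻¹), integral_inv_cosh,
      abs_of_pos (inv_pos.2 Real.pi_pos), smul_eq_mul, inv_mul_cancel₀ Real.pi_ne_zero]
  rw [integral_const_mul, integral_complex_ofReal, hreal, ofReal_one, mul_one]

/-- The quotient `(F s - F p) / sinh (π (s - p))`, with the removable singularity at `p` filled in
by means of `dslope`: the holomorphic function whose contour of integration is shifted. -/
noncomputable def sinhQuotient (F : ℂ → ℂ) (p s : ℂ) : ℂ :=
  dslope F p s / dslope (fun s ↦ Complex.sinh (π * (s - p))) p s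

lemma sinhQuotient_of_ne (F : ℂ → ℂ) {p s : ℂ} (hs : s ≠ p) :
    sinhQuotient F p s = (F s - F p) / Complex.sinh (π * (s - p)) := by
  rw [sinhQuotient, dslope_div_dslope_of_ne hs, sub_self, mul_zero, Complex.sinh_zero, sub_zero]

variable {F : ℂ → ℂ} {c y : ℝ}

lemma diffContOnCl_sinhQuotient (hF : DiffContOnCl ℂ F (im ⁻¹' Ioo (c - 1 / 2) (c + 1 / 2))) :
    DiffContOnCl ℂ (sinhQuotient F (c * I)) (im ⁻¹' Ioo (c - 1 / 2) (c + 1 / 2)) := by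
  have hU : IsOpen (im ⁻¹' Ioo (c - 1 / 2) (c + 1 / 2)) := isOpen_Ioo.preimage continuous_im
  have hp : c * I ∈ im ⁻¹' Ioo (c - 1 / 2) (c + 1 / 2) := by simp
  have hsinh : Differentiable ℂ fun s : ℂ ↦ Complex.sinh (π * (s - c * I)) := by fun_prop
  have hne : ∀ s ∈ closure (im ⁻¹' Ioo (c - 1 / 2) (c + 1 / 2)),
      dslope (fun s ↦ Complex.sinh (π * (s - c * I))) (c * I) s ≠ 0 := fun s hs ↦ by
    rw [closure_im_preimage_Ioo (by linarith)] at hs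
    refine dslope_sinh_ne_zero ?_
    rw [im_ofReal_mul, I_im, mul_one, abs_lt]
    constructor <;> linarith [hs.1, hs.2]
  have hquot := (diffContOnCl_dslope hU hp hF).smul
    ((diffContOnCl_dslope hU hp hsinh.diffContOnCl).inv hne)
  exact hquot

lemma tendsto_sinhQuotient_zero {a b : ℝ}
    (hF : F =o[stripAtInfty a b] fun s ↦ Real.cosh (π * s.re)) :
    Tendsto (sinhQuotient F (c * I)) (stripAtInfty a b) (𝓝 0) := by
  have hlim := ((hF.sub (const_isLittleO_cosh_strip a b (F (c * I)))).trans_isBigO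
    (cosh_isBigO_sinh_sub a b c)).tendsto_div_nhds_zero
  refine hlim.congr' (eventually_stripAtInfty.2 ?_)
  filter_upwards [(finite_singleton (0 : ℝ)).isCompact.compl_mem_cocompact] with T hT y _
  exact (sinhQuotient_of_ne F fun h ↦ hT (by simpa using congrArg re h)).symm

lemma sinhQuotient_of_cos_eq_zero (hy : Real.cos (π * (y - c)) = 0) (t : ℝ) :
    sinhQuotient F (c * I) (t + y * I) = (Real.sin (π * (y - c)) * I)⁻¹ *
      (F (t + y * I) / Real.cosh (π * t) - F (c * I) * ((Real.cosh (π * t))⁻¹ : ℝ)) := by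
  have hne : t + y * I ≠ c * I := fun h ↦ by
    have him : y = c := by simpa using congrArg im h
    simp [him] at hy
  rw [sinhQuotient_of_ne F hne, sinh_pi_mul_of_cos_eq_zero hy, ofReal_inv]
  ring

lemma integrable_sinhQuotient (hF : SechIntegrable F y) (hy : Real.cos (π * (y - c)) = 0) :
    Integrable fun t : ℝ ↦ sinhQuotient F (c * I) (t + y * I) := by
  simp only [sinhQuotient_of_cos_eq_zero hy]
  exact (Integrable.sub hF (integrable_const_mul_inv_cosh_pi _)).const_mul _

lemma integral_sinhQuotient (hF : SechIntegrable F y) (hy : Real.cos (π * (y - c)) = 0) :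
    ∫ t : ℝ, sinhQuotient F (c * I) (t + y * I) =
      (Real.sin (π * (y - c)) * I)⁻¹ * (sechIntegral F y - F (c * I)) := by
  simp only [sinhQuotient_of_cos_eq_zero hy]
  rw [integral_const_mul, integral_sub hF (integrable_const_mul_inv_cosh_pi _),
    integral_const_mul_inv_cosh_pi, sechIntegral]

lemma sechIntegral_add_half_add_sub_half
    (hd : DiffContOnCl ℂ F (im ⁻¹' Ioo (c - 1 / 2) (c + 1 / 2)))
    (ho : F =o[stripAtInfty (c - 1 / 2) (c + 1 / 2)] fun s ↦ Real.cosh (π * s.re))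
    (h₁ : SechIntegrable F (c + 1 / 2)) (h₂ : SechIntegrable F (c - 1 / 2)) :
    sechIntegral F (c + 1 / 2) + sechIntegral F (c - 1 / 2) = 2 * F (c * I) := by
  have hpos : π * (c + 1 / 2 - c) = π / 2 := by ring
  have hneg : π * (c - 1 / 2 - c) = -(π / 2) := by ring
  have hcos₁ : Real.cos (π * (c + 1 / 2 - c)) = 0 := by rw [hpos, Real.cos_pi_div_two]
  have hcos₂ : Real.cos (π * (c - 1 / 2 - c)) = 0 := by
    rw [hneg, Real.cos_neg, Real.cos_pi_div_two]
  have hshift := integral_horizontal_eq (show c - 1 / 2 < c + 1 / 2 by linarith)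
    (diffContOnCl_sinhQuotient hd) (tendsto_sinhQuotient_zero ho)
    (integrable_sinhQuotient h₂ hcos₂) (integrable_sinhQuotient h₁ hcos₁)
  rw [integral_sinhQuotient h₁ hcos₁, integral_sinhQuotient h₂ hcos₂, hpos, hneg, Real.sin_neg,
    Real.sin_pi_div_two, ofReal_neg, ofReal_one, neg_one_mul, one_mul, inv_neg, inv_I] at hshift
  linear_combination (-I) * hshift +
    (sechIntegral F (c + 1 / 2) + sechIntegral F (c - 1 / 2) - 2 * F (c * I)) * I_sq

lemma sechIntegral_zero_eq_sum_add {A : ℝ} (hd : DiffContOnCl ℂ F (im ⁻¹' Ioo (-A) 0))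
    (ho : F =o[stripAtInfty (-A) 0] fun s ↦ Real.cosh (π * s.re))
    (hF : ∀ k : ℕ, k ≤ A → SechIntegrable F (-k)) {N : ℕ} (hN : N ≤ A) :
    sechIntegral F 0 = 2 * ∑ k ∈ Finset.range N, (-1) ^ k * F (-I * (k + 1 / 2)) +
      (-1) ^ N * sechIntegral F (-N) := by
  induction N with
  | zero => simp
  | succ N ih =>
    rw [Nat.cast_add_one] at hN
    have htop : -((N : ℝ) + 1 / 2) + 1 / 2 = -N := by ring
    have hbot : -((N : ℝ) + 1 / 2) - 1 / 2 = -(N + 1 : ℕ) := by push_cast; ring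
    have hmid : (-((N : ℝ) + 1 / 2) : ℝ) * I = -I * (N + 1 / 2) := by push_cast; ring
    have hN₀ : (N : ℝ) ≤ A := by linarith
    have hbot_le : -A ≤ -(N + 1 : ℕ) := by push_cast; linarith
    have htop_le : -(N : ℝ) ≤ 0 := neg_nonpos.2 N.cast_nonneg
    have hpoisson := sechIntegral_add_half_add_sub_half (F := F) (c := -(N + 1 / 2))
      (hd.mono (preimage_mono (Ioo_subset_Ioo (hbot ▸ hbot_le) (htop ▸ htop_le))))
      (ho.mono (stripAtInfty_mono (hbot ▸ hbot_le) (htop ▸ htop_le)))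
      (htop ▸ hF N hN₀) (hbot ▸ hF (N + 1) (by push_cast; exact hN))
    rw [htop, hbot, hmid] at hpoisson
    rw [ih hN₀, Finset.sum_range_succ]
    linear_combination (-1) ^ N * hpoisson

lemma norm_div_cosh_le {z : ℂ} {r u : ℝ} (h : ‖z‖ ≤ r * Real.cosh u) :
    ‖z / (Real.cosh u : ℂ)‖ ≤ r := by
  rwa [norm_div, norm_real, Real.norm_of_nonneg (Real.cosh_pos u).le,
    div_le_iff₀ (Real.cosh_pos u)]

lemma sechIntegrable_of_norm_le {w : ℝ → ℝ} (hw : Integrable w)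
    (hF : Continuous fun t : ℝ ↦ F (t + y * I))
    (hFw : ∀ t : ℝ, ‖F (t + y * I)‖ ≤ w t * Real.cosh (π * t)) : SechIntegrable F y := by
  have hcont : Continuous fun t : ℝ ↦ F (t + y * I) / (Real.cosh (π * t) : ℂ) :=
    hF.div (by fun_prop) fun t ↦ ofReal_ne_zero.2 (Real.cosh_pos _).ne'
  exact hw.mono' hcont.aestronglyMeasurable (.of_forall fun t ↦ norm_div_cosh_le (hFw t))

lemma norm_sechIntegral_le {w : ℝ → ℝ} (hw : Integrable w)
    (hFw : ∀ t : ℝ, ‖F (t + y * I)‖ ≤ w t * Real.cosh (π * t)) :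
    ‖sechIntegral F y‖ ≤ ∫ t, w t :=
  norm_integral_le_of_norm_le hw (.of_forall fun t ↦ norm_div_cosh_le (hFw t))

end Poisson

section Transform

/-- The function `H(s) J_{2is}(x) s`, whose quotient by `cosh (π s)` is, on the real line, the
integrand of `Hplus`; it is integrated over the lines of heights `0, -1, -2, …`. -/
noncomputable def hplusNumerator (H : ℂ → ℂ) (x : ℝ) (s : ℂ) : ℂ :=
  H s * besselJ (2 * I * s) x * s

variable {A δ C x y : ℝ} {h : ℝ → ℝ} {H : ℂ → ℂ}

lemma hplusNumerator_neg_I_mul (H : ℂ → ℂ) (x : ℝ) (k : ℂ) :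
    hplusNumerator H x (-I * (k + 1 / 2)) =
      -I * ((k + 1 / 2) * H (-I * (k + 1 / 2)) * besselJ (2 * k + 1) x) := by
  have horder : 2 * I * (-I * (k + 1 / 2)) = 2 * k + 1 := by
    linear_combination (-2 * k - 1) * I_sq
  rw [hplusNumerator, horder]
  ring

lemma Hplus_integrand_eq (hext : ∀ t : ℝ, H t = h t) (x t : ℝ) :
    (h t : ℂ) * besselJ (2 * I * t) x * ((t : ℂ) / (Real.cosh (π * t) : ℂ)) =
      hplusNumerator H x (t + (0 : ℝ) * I) / (Real.cosh (π * t) : ℂ) := by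
  rw [ofReal_zero, zero_mul, add_zero, hplusNumerator, hext, mul_div_assoc]

lemma Hplus_eq_sechIntegral (hext : ∀ t : ℝ, H t = h t) (x : ℝ) :
    Hplus h x = 2 * I / π * sechIntegral (hplusNumerator H x) 0 := by
  simp only [Hplus, sechIntegral, Hplus_integrand_eq hext]

lemma norm_besselJ_two_mul_I_mul_le (hx : 0 < x) {s : ℂ} (hs : s.im ≤ 1 / 4) :
    ‖besselJ (2 * I * s) x‖ ≤
      4 * Real.exp ((x / 2) ^ 2) * (x / 2) ^ (-2 * s.im) * Real.cosh (π * s.re) := by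
  have hre : (2 * I * s).re = -2 * s.im := by simp
  have him : (2 * I * s).im = 2 * s.re := by simp
  have hJ := norm_besselJ_le hx (ν := 2 * I * s) (by linarith)
  rw [hre, him, mul_left_comm π 2 s.re] at hJ
  calc ‖besselJ (2 * I * s) x‖
    _ ≤ 2 * √(Real.cosh (2 * (π * s.re))) * (x / 2) ^ (-2 * s.im) * Real.exp ((x / 2) ^ 2) := hJ
    _ ≤ 2 * (2 * Real.cosh (π * s.re)) * (x / 2) ^ (-2 * s.im) * Real.exp ((x / 2) ^ 2) := by
        gcongr
        exact sqrt_cosh_two_mul_le _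
    _ = _ := by ring

lemma nonneg_of_norm_le_rpow {z s : ℂ} {r : ℝ} (hz : ‖z‖ ≤ C * (1 + ‖s‖) ^ r) : 0 ≤ C :=
  (mul_nonneg_iff_of_pos_right (Real.rpow_pos_of_pos (by positivity) r)).1
    ((norm_nonneg z).trans hz)

lemma norm_mul_le_of_norm_le_rpow {z s : ℂ} (hδ : -1 ≤ δ)
    (hz : ‖z‖ ≤ C * (1 + ‖s‖) ^ (-(2 + δ))) : ‖z * s‖ ≤ C * (1 + |s.re|) ^ (-(1 + δ)) := by
  have hs : 0 < 1 + ‖s‖ := by positivity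
  have hC : 0 ≤ C := nonneg_of_norm_le_rpow hz
  calc ‖z * s‖
    _ ≤ C * (1 + ‖s‖) ^ (-(2 + δ)) * (1 + ‖s‖) := by
        rw [norm_mul]
        gcongr
        linarith
    _ = C * (1 + ‖s‖) ^ (-(1 + δ)) := by
        rw [mul_assoc, ← Real.rpow_add_one hs.ne']
        ring_nf
    _ ≤ C * (1 + |s.re|) ^ (-(1 + δ)) :=
        mul_le_mul_of_nonneg_left (Real.rpow_le_rpow_of_nonpos (by positivity)
          (by linarith [abs_re_le_norm s]) (by linarith)) hC

lemma norm_hplusNumerator_le (hx : 0 < x) (hδ : -1 ≤ δ) {s : ℂ} (hs : s.im ≤ 1 / 4)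
    (hH : ‖H s‖ ≤ C * (1 + ‖s‖) ^ (-(2 + δ))) :
    ‖hplusNumerator H x s‖ ≤ 4 * C * Real.exp ((x / 2) ^ 2) * (x / 2) ^ (-2 * s.im) *
      (1 + |s.re|) ^ (-(1 + δ)) * Real.cosh (π * s.re) := by
  rw [hplusNumerator, mul_right_comm, norm_mul]
  refine (mul_le_mul (norm_mul_le_of_norm_le_rpow hδ hH) (norm_besselJ_two_mul_I_mul_le hx hs)
    (norm_nonneg _) ((norm_nonneg _).trans (norm_mul_le_of_norm_le_rpow hδ hH))).trans_eq ?_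
  ring

lemma diffContOnCl_hplusNumerator (hx : 0 < x) (hA : 0 < A)
    (hH : DiffContOnCl ℂ H (im ⁻¹' Ioo (-A) 0)) :
    DiffContOnCl ℂ (hplusNumerator H x) (im ⁻¹' Ioo (-A) 0) := by
  have hJ : DifferentiableOn ℂ (fun s ↦ besselJ (2 * I * s) x)
      (closure (im ⁻¹' Ioo (-A) 0)) := by
    rw [closure_im_preimage_Ioo (neg_lt_zero.2 hA).ne]
    refine (differentiableOn_besselJ hx).comp (by fun_prop) fun s hs ↦ ?_
    have hre : (2 * I * s).re = -2 * s.im := by simp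
    rw [mem_ofPred_eq, hre]
    linarith [hs.2]
  exact (hH.smul hJ.diffContOnCl).smul differentiable_id.diffContOnCl

lemma continuous_horizontal {f : ℂ → ℂ} {a b : ℝ} (hab : a ≠ b)
    (hf : DiffContOnCl ℂ f (im ⁻¹' Ioo a b)) (hy : y ∈ Icc a b) :
    Continuous fun t : ℝ ↦ f (t + y * I) := by
  refine hf.continuousOn.comp_continuous (by fun_prop) fun t ↦ ?_
  rw [closure_im_preimage_Ioo hab]
  simpa using hy

lemma integrable_one_add_abs_rpow (hδ : 0 < δ) :
    Integrable fun t : ℝ ↦ (1 + |t|) ^ (-(1 + δ)) := by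
  simpa only [Real.norm_eq_abs] using
    integrable_one_add_norm (E := ℝ) (μ := volume) (r := 1 + δ) (by simpa using hδ)

lemma norm_hplusNumerator_horizontal_le (hx : 0 < x) (hδ : -1 ≤ δ) (hy : y ≤ 1 / 4)
    (hC : ∀ t : ℝ, ‖H (t + y * I)‖ ≤ C * (1 + ‖t + y * I‖) ^ (-(2 + δ))) (t : ℝ) :
    ‖hplusNumerator H x (t + y * I)‖ ≤ 4 * C * Real.exp ((x / 2) ^ 2) * (x / 2) ^ (-2 * y) *
      (1 + |t|) ^ (-(1 + δ)) * Real.cosh (π * t) := by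
  have hre : (t + y * I).re = t := by simp
  have him : (t + y * I).im = y := by simp
  have h := norm_hplusNumerator_le hx hδ (him.trans_le hy) (hC t)
  rwa [hre, him] at h

lemma sechIntegrable_hplusNumerator (hx : 0 < x) (hA : 0 < A) (hδ : 0 < δ)
    (hH : DiffContOnCl ℂ H (im ⁻¹' Ioo (-A) 0))
    (hC : ∀ s : ℂ, s.im ∈ Icc (-A) 0 → ‖H s‖ ≤ C * (1 + ‖s‖) ^ (-(2 + δ)))
    (hy : y ∈ Icc (-A) 0) : SechIntegrable (hplusNumerator H x) y :=
  sechIntegrable_of_norm_le ((integrable_one_add_abs_rpow hδ).const_mul _)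
    (continuous_horizontal (neg_lt_zero.2 hA).ne (diffContOnCl_hplusNumerator hx hA hH) hy)
    (norm_hplusNumerator_horizontal_le hx (by linarith) (by linarith [hy.2])
      fun t ↦ hC _ (by simpa using hy))

lemma hplusNumerator_isLittleO_cosh (hx : 0 < x) (hA : 0 ≤ A) (hδ : -1 < δ)
    (hC : ∀ s : ℂ, s.im ∈ Icc (-A) 0 → ‖H s‖ ≤ C * (1 + ‖s‖) ^ (-(2 + δ))) :
    hplusNumerator H x =o[stripAtInfty (-A) 0] fun s ↦ Real.cosh (π * s.re) := by
  have hC₀ : 0 ≤ C := nonneg_of_norm_le_rpow (hC 0 (by simpa using hA))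
  have hO : hplusNumerator H x =O[stripAtInfty (-A) 0]
      fun s ↦ (1 + |s.re|) ^ (-(1 + δ)) * Real.cosh (π * s.re) := by
    refine .of_bound (4 * C * Real.exp ((x / 2) ^ 2) * (1 + x / 2) ^ (2 * A))
      (eventually_inf_principal.2 (.of_forall fun s hs ↦ ?_))
    have hpow : (x / 2) ^ (-2 * s.im) ≤ (1 + x / 2) ^ (2 * A) :=
      (Real.rpow_le_rpow (by positivity) (by linarith) (by linarith [hs.2])).trans
        (Real.rpow_le_rpow_of_exponent_le (by linarith) (by linarith [hs.1]))
    have hle := norm_hplusNumerator_le hx hδ.le (by linarith [hs.2]) (hC s hs)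
    rw [Real.norm_of_nonneg (by positivity [Real.cosh_pos (π * s.re)]), ← mul_assoc]
    exact hle.trans (by gcongr)
  have hdecay : Tendsto (fun s : ℂ ↦ (1 + |s.re|) ^ (-(1 + δ))) (stripAtInfty (-A) 0) (𝓝 0) :=
    ((tendsto_rpow_neg_atTop (by linarith)).comp
      (tendsto_atTop_add_const_left _ 1 tendsto_norm_cocompact_atTop)).comp
      (tendsto_comap.mono_left inf_le_left)
  simpa only [one_mul] using hO.trans_isLittleO
    (((isLittleO_one_iff ℝ).2 hdecay).mul_isBigO (isBigO_refl _ _))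

lemma Hplus_sub_sum_eq (hext : ∀ t : ℝ, H t = h t) (hx : 0 < x) (hA : 0 < A) (hδ : 0 < δ)
    (hH : DiffContOnCl ℂ H (im ⁻¹' Ioo (-A) 0))
    (hC : ∀ s : ℂ, s.im ∈ Icc (-A) 0 → ‖H s‖ ≤ C * (1 + ‖s‖) ^ (-(2 + δ)))
    {N : ℕ} (hN : N ≤ A) :
    Hplus h x - 4 / π * ∑ k ∈ Finset.range N,
        (-1) ^ k * ((k : ℂ) + 1 / 2) * H (-I * (k + 1 / 2)) * besselJ (2 * k + 1) x =
      2 * I / π * ((-1) ^ N * sechIntegral (hplusNumerator H x) (-N)) := by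
  have hres := sechIntegral_zero_eq_sum_add (diffContOnCl_hplusNumerator hx hA hH)
    (hplusNumerator_isLittleO_cosh hx hA.le (by linarith) hC)
    (fun k hk ↦ sechIntegrable_hplusNumerator hx hA hδ hH hC (by simpa using hk)) hN
  have hsum : ∑ k ∈ Finset.range N, (-1) ^ k * hplusNumerator H x (-I * (k + 1 / 2)) =
      -I * ∑ k ∈ Finset.range N,
        (-1) ^ k * ((k : ℂ) + 1 / 2) * H (-I * (k + 1 / 2)) * besselJ (2 * k + 1) x := by
    rw [Finset.mul_sum]
    exact Finset.sum_congr rfl fun k _ ↦ by rw [hplusNumerator_neg_I_mul]; ring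
  rw [Hplus_eq_sechIntegral hext, hres, hsum]
  linear_combination (-(4 / π) * ∑ k ∈ Finset.range N,
    (-1) ^ k * ((k : ℂ) + 1 / 2) * H (-I * (k + 1 / 2)) * besselJ (2 * k + 1) x) * I_sq

lemma norm_Hplus_sub_sum_le (hext : ∀ t : ℝ, H t = h t) (hx : 0 < x) (hA : 0 < A) (hδ : 0 < δ)
    (hH : DiffContOnCl ℂ H (im ⁻¹' Ioo (-A) 0))
    (hC : ∀ s : ℂ, s.im ∈ Icc (-A) 0 → ‖H s‖ ≤ C * (1 + ‖s‖) ^ (-(2 + δ)))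
    {N : ℕ} (hN : N ≤ A) :
    ‖Hplus h x - 4 / π * ∑ k ∈ Finset.range N,
        (-1) ^ k * ((k : ℂ) + 1 / 2) * H (-I * (k + 1 / 2)) * besselJ (2 * k + 1) x‖ ≤
      2 / π * (4 * C * Real.exp ((x / 2) ^ 2) * (x / 2) ^ (2 * N) *
        ∫ t : ℝ, (1 + |t|) ^ (-(1 + δ))) := by
  have hline := norm_sechIntegral_le (F := hplusNumerator H x) (y := -N)
    ((integrable_one_add_abs_rpow hδ).const_mul _)
    (norm_hplusNumerator_horizontal_le hx (by linarith) (by linarith [N.cast_nonneg (α := ℝ)])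
      fun t ↦ hC _ (by simpa using hN))
  have hpow : (x / 2) ^ (-2 * -(N : ℝ)) = (x / 2) ^ (2 * N) := by
    rw [neg_mul_neg, ← Real.rpow_natCast]
    push_cast
    rfl
  rw [integral_const_mul, hpow] at hline
  have hfactor : ‖2 * I / (π : ℂ)‖ = 2 / π := by simp [abs_of_pos Real.pi_pos]
  rw [Hplus_sub_sum_eq hext hx hA hδ hH hC hN, norm_mul, hfactor, norm_mul, norm_pow, norm_neg,
    norm_one, one_pow, one_mul]
  gcongr

lemma IsInHClass.diffContOnCl (hh : IsInHClass A δ h H) (hA : 0 < A) :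
    DiffContOnCl ℂ H (im ⁻¹' Ioo (-A) 0) := by
  refine (hh.holo.mono ?_).diffContOnCl
  rw [closure_im_preimage_Ioo (neg_lt_zero.2 hA).ne]
  exact fun s hs ↦ (abs_of_nonpos hs.2).trans_le (neg_le.1 hs.1)

end Transform

theorem Hplus_expansion_general {A δ : ℝ} (hA : 0 < A) (hδ : 0 < δ) {h : ℝ → ℝ} {H : ℂ → ℂ}
    (hext : ∀ t : ℝ, H t = h t) (hH : DiffContOnCl ℂ H (im ⁻¹' Ioo (-A) 0))
    (hb : ∃ C : ℝ, ∀ s : ℂ, s.im ∈ Icc (-A) 0 → ‖H s‖ ≤ C * (1 + ‖s‖) ^ (-(2 + δ))) (X : ℝ) :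
    ∃ C : ℝ, ∀ x : ℝ, 0 < x → x < X →
      Integrable (fun t : ℝ ↦
        (h t : ℂ) * besselJ (2 * I * t) x * ((t : ℂ) / (Real.cosh (π * t) : ℂ))) ∧
      ‖Hplus h x - (4 / (π : ℂ)) * ∑ k ∈ Finset.range ⌊A⌋₊,
          (-1) ^ k * ((k : ℂ) + 1 / 2) * H (-I * ((k : ℂ) + 1 / 2)) * besselJ (2 * k + 1) x‖ ≤
        C * x ^ (2 * ⌊A⌋₊) := by
  obtain ⟨C, hC⟩ := hb
  have hC₀ : 0 ≤ C := nonneg_of_norm_le_rpow (hC 0 (by simpa using hA.le))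
  refine ⟨2 / π * (4 * C * Real.exp ((X / 2) ^ 2) * ∫ t : ℝ, (1 + |t|) ^ (-(1 + δ))),
    fun x hx hxX ↦ ⟨?_, ?_⟩⟩
  · simp only [Hplus_integrand_eq hext]
    exact sechIntegrable_hplusNumerator hx hA hδ hH hC (by simpa using hA.le)
  calc _ ≤ 2 / π * (4 * C * Real.exp ((x / 2) ^ 2) * (x / 2) ^ (2 * ⌊A⌋₊) *
          ∫ t : ℝ, (1 + |t|) ^ (-(1 + δ))) :=
        norm_Hplus_sub_sum_le hext hx hA hδ hH hC (Nat.floor_le hA.le)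
    _ ≤ 2 / π * (4 * C * Real.exp ((X / 2) ^ 2) * x ^ (2 * ⌊A⌋₊) *
          ∫ t : ℝ, (1 + |t|) ^ (-(1 + δ))) := by
        gcongr
        exact half_le_self hx.le
    _ = _ := by ring

/-- For `h ∈ 𝓗(A,δ)` with `A > 13` and `0 < x < 4π`, the integral defining `H⁺(x)` converges
absolutely, and `H⁺(x)` equals `(4/π) ∑_{k<⌊A⌋} (-1)^k (k+1/2) h(-i(k+1/2)) J_{2k+1}(x)`
up to an error `O_A(x^{2⌊A⌋})`. -/
theorem Hplus_expansion (A δ : ℝ) (hA : 13 < A) (hδ : 0 < δ) (h : ℝ → ℝ) (H : ℂ → ℂ)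
    (hh : IsInHClass A δ h H) :
    ∃ C : ℝ, ∀ x : ℝ, 0 < x → x < 4 * π →
      Integrable (fun t : ℝ =>
        (h t : ℂ) * besselJ (2 * Complex.I * t) x * ((t : ℂ) / (Real.cosh (π * t) : ℂ))) ∧
      ‖Hplus h x - (4 / (π : ℂ)) * ∑ k ∈ Finset.range ⌊A⌋₊,
          (-1) ^ k * ((k : ℂ) + 1 / 2) * H (-Complex.I * ((k : ℂ) + 1 / 2)) *
            besselJ (2 * k + 1) x‖ ≤ C * x ^ (2 * ⌊A⌋₊) := by
  have hA₀ : 0 < A := by linarith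
  exact Hplus_expansion_general hA₀ hδ hh.extends_h (hh.diffContOnCl hA₀)
    (hh.bound.imp fun C hC s hs ↦ hC s ((abs_of_nonpos hs.2).trans_le (neg_le.1 hs.1))) (4 * π)
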